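/- Suppose H_A = C^d, Alice's measurement is the full Bell state measurement {M_a = (U_a ⊗ 1)Φ+(U_a† ⊗ 1)}_{a=0}^{d²−1} with {U_a} the Heisenberg–Weyl unitaries, and the input set {ω_x} is tomographically complete. Then the generalized teleportation robustness of the resulting assemblage equals the generalized entanglement robustness of the shared state: τ_gen({σ_{a|ω_x}}) = ε_gen(ρ^{AB}). -/

import Mathlib

open Matrix ComplexOrder
open scoped Kronecker

namespace Tele

noncomputable def ptrace₁ {V B : Type*} [Fintype V]
    (M : Matrix (V × B) (V × B) ℂ) : Matrix B B ℂ :=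
  Matrix.of fun b b' => ∑ v, M (v, b) (v, b')

noncomputable def ptrace₂ {V B : Type*} [Fintype B]
    (M : Matrix (V × B) (V × B) ℂ) : Matrix V V ℂ :=
  Matrix.of fun v v' => ∑ b, M (v, b) (v', b)

noncomputable def ptraceMid {V A B : Type*} [Fintype A]
    (M : Matrix (V × A × B) (V × A × B) ℂ) : Matrix (V × B) (V × B) ℂ :=
  Matrix.of fun p q => ∑ a, M (p.1, a, p.2) (q.1, a, q.2)

noncomputable def ptraceVA {V A B : Type*} [Fintype V] [Fintype A]
    (M : Matrix (V × A × B) (V × A × B) ℂ) : Matrix B B ℂ :=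
  Matrix.of fun b b' => ∑ v, ∑ a, M (v, a, b) (v, a, b')

noncomputable def ptraceV₁A {V V₁ A B : Type*} [Fintype V₁] [Fintype A]
    (M : Matrix (V × V₁ × A × B) (V × V₁ × A × B) ℂ) : Matrix (V × B) (V × B) ℂ :=
  Matrix.of fun p q => ∑ v₁, ∑ a, M (p.1, v₁, a, p.2) (q.1, v₁, a, q.2)

def ptranspose₁ {V B : Type*} (M : Matrix (V × B) (V × B) ℂ) : Matrix (V × B) (V × B) ℂ :=
  Matrix.of fun p q => M (q.1, p.2) (p.1, q.2)

def ptranspose₂ {V B : Type*} (M : Matrix (V × B) (V × B) ℂ) : Matrix (V × B) (V × B) ℂ :=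
  Matrix.of fun p q => M (p.1, q.2) (q.1, p.2)

def Separable {V B : Type*} [Fintype V] [Fintype B]
    (M : Matrix (V × B) (V × B) ℂ) : Prop :=
  ∃ (n : ℕ) (τ : Fin n → Matrix V V ℂ) (χ : Fin n → Matrix B B ℂ),
    (∀ i, (τ i).PosSemidef) ∧ (∀ i, (χ i).PosSemidef) ∧ M = ∑ i, τ i ⊗ₖ χ i

def IsState {V : Type*} [Fintype V] (ρ : Matrix V V ℂ) : Prop :=
  ρ.PosSemidef ∧ ρ.trace = 1

noncomputable def maxEnt (d : ℕ) : Matrix (Fin d × Fin d) (Fin d × Fin d) ℂ :=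
  Matrix.of fun p q => if p.1 = p.2 ∧ q.1 = q.2 then (d : ℂ)⁻¹ else 0

noncomputable def chanOp {V A B : Type*} [Fintype V] [Fintype A] [Fintype B]
    [DecidableEq V] [DecidableEq B]
    (M : Matrix (V × A) (V × A) ℂ) (ρ : Matrix (A × B) (A × B) ℂ) :
    Matrix (V × B) (V × B) ℂ :=
  ptraceMid ((Matrix.reindex (Equiv.prodAssoc V A B) (Equiv.prodAssoc V A B)
      (M ⊗ₖ (1 : Matrix B B ℂ))) * ((1 : Matrix V V ℂ) ⊗ₖ ρ))

noncomputable def teleA {V A B : Type*} [Fintype V] [Fintype A] [Fintype B] [DecidableEq B]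
    (M : Matrix (V × A) (V × A) ℂ) (ρ : Matrix (A × B) (A × B) ℂ) (ω : Matrix V V ℂ) :
    Matrix B B ℂ :=
  ptraceVA ((Matrix.reindex (Equiv.prodAssoc V A B) (Equiv.prodAssoc V A B)
      (M ⊗ₖ (1 : Matrix B B ℂ))) * (ω ⊗ₖ ρ))

noncomputable def margOp {V A : Type*} [Fintype V] [Fintype A] [DecidableEq V]
    (M : Matrix (V × A) (V × A) ℂ) (ρA : Matrix A A ℂ) : Matrix V V ℂ :=
  ptrace₂ (M * ((1 : Matrix V V ℂ) ⊗ₖ ρA))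

noncomputable def piOp {A B : Type*} [Fintype A] [Fintype B] [DecidableEq B]
    (χ : Matrix A A ℂ) (ρ : Matrix (A × B) (A × B) ℂ) : Matrix B B ℂ :=
  ptrace₁ ((χ ⊗ₖ (1 : Matrix B B ℂ)) * ρ)

def TomoComplete {V X : Type*} [Fintype V] (ω : X → Matrix V V ℂ) : Prop :=
  ∀ H : Matrix V V ℂ, H.IsHermitian → H ∈ Submodule.span ℝ (Set.range ω)

noncomputable def shiftX (d : ℕ) : Matrix (Fin d) (Fin d) ℂ :=
  Matrix.of fun i j => if (i : ℕ) = ((j : ℕ) + 1) % d then 1 else 0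

noncomputable def clockZ (d : ℕ) : Matrix (Fin d) (Fin d) ℂ :=
  Matrix.of fun i j =>
    if i = j then Complex.exp (2 * (Real.pi : ℂ) * Complex.I * ((i : ℕ) : ℂ) / (d : ℂ)) else 0

noncomputable def HW (d : ℕ) (a : Fin d × Fin d) : Matrix (Fin d) (Fin d) ℂ :=
  shiftX d ^ (a.1 : ℕ) * clockZ d ^ (a.2 : ℕ)

noncomputable def bellPOVM (d : ℕ) (a : Fin d × Fin d) :
    Matrix (Fin d × Fin d) (Fin d × Fin d) ℂ :=
  (HW d a ⊗ₖ (1 : Matrix (Fin d) (Fin d) ℂ)) * maxEnt d *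
    ((HW d a)ᴴ ⊗ₖ (1 : Matrix (Fin d) (Fin d) ℂ))

noncomputable def negativity {A B : Type*} [Fintype A] [Fintype B]
    (ρ : Matrix (A × B) (A × B) ℂ) : ℝ :=
  sInf {t : ℝ | ∃ ρp ρm : Matrix (A × B) (A × B) ℂ,
    ρ = ρp - ρm ∧ (ptranspose₁ ρp).PosSemidef ∧ (ptranspose₁ ρm).PosSemidef ∧
    t = (ρm.trace).re}

noncomputable def epsGen {A B : Type*} [Fintype A] [Fintype B]
    (ρ : Matrix (A × B) (A × B) ℂ) : ℝ :=
  sInf {r : ℝ | 0 ≤ r ∧ ∃ ρs : Matrix (A × B) (A × B) ℂ, IsState ρs ∧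
    Separable ((((1 + r : ℝ) : ℂ))⁻¹ • (ρ + ((r : ℝ) : ℂ) • ρs))}

noncomputable def epsSep {A B : Type*} [Fintype A] [Fintype B]
    (ρ : Matrix (A × B) (A × B) ℂ) : ℝ :=
  sInf {r : ℝ | 0 ≤ r ∧ ∃ ρs : Matrix (A × B) (A × B) ℂ, IsState ρs ∧ Separable ρs ∧
    Separable ((((1 + r : ℝ) : ℂ))⁻¹ • (ρ + ((r : ℝ) : ℂ) • ρs))}

noncomputable def epsR {A B : Type*} [Fintype A] [Fintype B] [DecidableEq A] [DecidableEq B]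
    (ρ : Matrix (A × B) (A × B) ℂ) : ℝ :=
  sInf {r : ℝ | 0 ≤ r ∧
    Separable ((((1 + r : ℝ) : ℂ))⁻¹ •
      (ρ + ((r : ℝ) : ℂ) • ((Fintype.card (A × B) : ℂ)⁻¹ • (1 : Matrix (A × B) (A × B) ℂ))))}

noncomputable def epsBSA {A B : Type*} [Fintype A] [Fintype B]
    (ρ : Matrix (A × B) (A × B) ℂ) : ℝ :=
  sInf {p : ℝ | 0 ≤ p ∧ p ≤ 1 ∧ ∃ ρs σS : Matrix (A × B) (A × B) ℂ,
    IsState ρs ∧ IsState σS ∧ Separable σS ∧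
    ρ = ((p : ℝ) : ℂ) • ρs + (((1 - p : ℝ)) : ℂ) • σS}

noncomputable def tauGen {V B X ι : Type*} [Fintype V] [Fintype B] [Fintype ι]
    [DecidableEq V] [DecidableEq B]
    (ω : X → Matrix V V ℂ) (σ : ι → X → Matrix B B ℂ) : ℝ :=
  sInf {r : ℝ | 0 ≤ r ∧ ∃ (m : ℕ) (ρs : Matrix (Fin m × B) (Fin m × B) ℂ)
      (N : ι → Matrix (V × Fin m) (V × Fin m) ℂ) (Ms : ι → Matrix (V × B) (V × B) ℂ),
      IsState ρs ∧ (∀ a, (N a).PosSemidef) ∧ ((∑ a, N a) = 1) ∧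
      (∀ a, (Ms a).PosSemidef ∧ Separable (Ms a)) ∧
      (∀ a x, (((1 + r : ℝ) : ℂ))⁻¹ • (σ a x + ((r : ℝ) : ℂ) • teleA (N a) ρs (ω x)) =
        ptrace₁ (Ms a * (ω x ⊗ₖ (1 : Matrix B B ℂ)))) ∧
      (∀ x, (∑ a, Ms a) = (1 : Matrix V V ℂ) ⊗ₖ
        ((((1 + r : ℝ) : ℂ))⁻¹ •
          ((∑ a, σ a x) + ((r : ℝ) : ℂ) • ∑ a, teleA (N a) ρs (ω x))))}

noncomputable def tauCl {V B X ι : Type*} [Fintype V] [Fintype B] [Fintype ι]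
    [DecidableEq V] [DecidableEq B]
    (ω : X → Matrix V V ℂ) (σ : ι → X → Matrix B B ℂ) : ℝ :=
  sInf {r : ℝ | 0 ≤ r ∧ ∃ (Mb Ms : ι → Matrix (V × B) (V × B) ℂ),
    (∀ a, (Mb a).PosSemidef ∧ Separable (Mb a)) ∧
    (∀ a, (Ms a).PosSemidef ∧ Separable (Ms a)) ∧
    (∀ x, (∑ a, Mb a) = (1 : Matrix V V ℂ) ⊗ₖ
      (∑ a, ptrace₁ (Mb a * (ω x ⊗ₖ (1 : Matrix B B ℂ))))) ∧
    (∀ a x, (((1 + r : ℝ) : ℂ))⁻¹ •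
        (σ a x + ((r : ℝ) : ℂ) • ptrace₁ (Mb a * (ω x ⊗ₖ (1 : Matrix B B ℂ)))) =
      ptrace₁ (Ms a * (ω x ⊗ₖ (1 : Matrix B B ℂ)))) ∧
    (∀ x, (∑ a, Ms a) = (1 : Matrix V V ℂ) ⊗ₖ
      ((((1 + r : ℝ) : ℂ))⁻¹ •
        ((∑ a, σ a x) + ((r : ℝ) : ℂ) •
          ∑ a, ptrace₁ (Mb a * (ω x ⊗ₖ (1 : Matrix B B ℂ))))))}

noncomputable def tauR {V B X ι : Type*} [Fintype V] [Fintype B] [Fintype ι]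
    [DecidableEq V] [DecidableEq B]
    (ω : X → Matrix V V ℂ) (σ : ι → X → Matrix B B ℂ) : ℝ :=
  sInf {r : ℝ | 0 ≤ r ∧ ∃ (p : ι → ℝ) (Ms : ι → Matrix (V × B) (V × B) ℂ),
    (∀ a, 0 ≤ p a) ∧ ((∑ a, p a) = 1) ∧
    (∀ a, (Ms a).PosSemidef ∧ Separable (Ms a)) ∧
    (∀ a x, (((1 + r : ℝ) : ℂ))⁻¹ •
        (σ a x + ((r * p a : ℝ) : ℂ) • ((Fintype.card B : ℂ)⁻¹ • (1 : Matrix B B ℂ))) =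
      ptrace₁ (Ms a * (ω x ⊗ₖ (1 : Matrix B B ℂ)))) ∧
    (∀ x, (∑ a, Ms a) = (1 : Matrix V V ℂ) ⊗ₖ
      ((((1 + r : ℝ) : ℂ))⁻¹ •
        ((∑ a, σ a x) + ((r : ℝ) : ℂ) • ((Fintype.card B : ℂ)⁻¹ • (1 : Matrix B B ℂ)))))}

noncomputable def TW {V B X ι : Type*} [Fintype V] [Fintype B] [Fintype ι]
    [DecidableEq B]
    (ω : X → Matrix V V ℂ) (σ : ι → X → Matrix B B ℂ) : ℝ :=
  sInf {p : ℝ | 0 ≤ p ∧ p ≤ 1 ∧ ∃ (Mt Mb : ι → Matrix (V × B) (V × B) ℂ),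
    (∀ a, (Mb a).PosSemidef ∧ Separable (Mb a)) ∧
    (∀ a, (ptranspose₁ (Mt a)).PosSemidef) ∧
    (∀ x x', (∑ a, ptrace₁ (Mt a * (ω x ⊗ₖ (1 : Matrix B B ℂ)))) =
      ∑ a, ptrace₁ (Mt a * (ω x' ⊗ₖ (1 : Matrix B B ℂ)))) ∧
    (∀ a x, σ a x = ptrace₁
      ((((p : ℝ) : ℂ) • Mt a + (((1 - p : ℝ)) : ℂ) • Mb a) * (ω x ⊗ₖ (1 : Matrix B B ℂ))))}

/-!
The teleportation assemblage of a POVM element `M` and a shared state `ρ` depends on the input `W`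
linearly, through the channel operator of `M` and `ρ`, and tomographically complete inputs
determine that operator. For the Bell effect of a unitary `U` the channel operator is
`(1/d) (U ⊗ 1) ρ^{T_V} (U† ⊗ 1)`. Local conjugations and partial transposition preserve
separability, so measuring a separable mixture of `ρ` and a noise state gives a separable simulation with the same
amount of noise. Conversely, undoing these maps on the operators of a simulation and averaging
over the outcomes yields a separable mixture of `ρ` and a decoded noise operator; the latter is a
state because the partial transpose of a channel operator is positive.
-/

section PartialTraceAndTranspose

variable {V B : Type*}

theorem ptrace₁_add [Fintype V] (M N : Matrix (V × B) (V × B) ℂ) :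
    ptrace₁ (M + N) = ptrace₁ M + ptrace₁ N := by
  ext b b'
  simp [ptrace₁, Finset.sum_add_distrib]

theorem ptrace₁_smul [Fintype V] (c : ℂ) (M : Matrix (V × B) (V × B) ℂ) :
    ptrace₁ (c • M) = c • ptrace₁ M := by
  ext b b'
  simp [ptrace₁, Finset.mul_sum]

theorem ptrace₁_kronecker [Fintype V] (P : Matrix V V ℂ) (Q : Matrix B B ℂ) :
    ptrace₁ (P ⊗ₖ Q) = P.trace • Q := by
  ext b b'
  simp [ptrace₁, Matrix.trace, Finset.sum_mul]

theorem trace_ptrace₁ [Fintype V] [Fintype B] (M : Matrix (V × B) (V × B) ℂ) :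
    (ptrace₁ M).trace = M.trace := by
  simp only [ptrace₁, Matrix.trace, diag_apply, of_apply, Fintype.sum_prod_type]
  exact Finset.sum_comm

theorem ptranspose₁_kronecker (P : Matrix V V ℂ) (Q : Matrix B B ℂ) :
    ptranspose₁ (P ⊗ₖ Q) = Pᵀ ⊗ₖ Q :=
  rfl

theorem ptranspose₁_ptranspose₁ (M : Matrix (V × B) (V × B) ℂ) :
    ptranspose₁ (ptranspose₁ M) = M :=
  rfl

theorem ptranspose₁_add (M N : Matrix (V × B) (V × B) ℂ) :
    ptranspose₁ (M + N) = ptranspose₁ M + ptranspose₁ N :=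
  rfl

theorem ptranspose₁_smul (c : ℂ) (M : Matrix (V × B) (V × B) ℂ) :
    ptranspose₁ (c • M) = c • ptranspose₁ M :=
  rfl

theorem trace_ptranspose₁ [Fintype V] [Fintype B] (M : Matrix (V × B) (V × B) ℂ) :
    (ptranspose₁ M).trace = M.trace :=
  rfl

theorem kronecker_one_mul_mul_kronecker_one_apply [Fintype V] [Fintype B] [DecidableEq B]
    (P Q : Matrix V V ℂ) (M : Matrix (V × B) (V × B) ℂ) (p q : V × B) :
    ((P ⊗ₖ (1 : Matrix B B ℂ)) * M * (Q ⊗ₖ (1 : Matrix B B ℂ))) p q =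
      ∑ k, ∑ l, P p.1 k * M (k, p.2) (l, q.2) * Q l q.1 := by
  simp only [mul_apply, Fintype.sum_prod_type, kroneckerMap_apply, one_apply, mul_ite, ite_mul,
    mul_one, mul_zero, zero_mul, Finset.sum_ite_eq, Finset.sum_ite_eq', Finset.mem_univ, if_true,
    Finset.sum_mul]
  exact Finset.sum_comm

theorem ptranspose₁_mul_mul [Fintype V] [Fintype B] [DecidableEq B]
    (P Q : Matrix V V ℂ) (M : Matrix (V × B) (V × B) ℂ) :
    ptranspose₁ ((P ⊗ₖ (1 : Matrix B B ℂ)) * M * (Q ⊗ₖ (1 : Matrix B B ℂ))) =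
      (Qᵀ ⊗ₖ (1 : Matrix B B ℂ)) * ptranspose₁ M * (Pᵀ ⊗ₖ (1 : Matrix B B ℂ)) := by
  ext p q
  rw [kronecker_one_mul_mul_kronecker_one_apply, ptranspose₁, of_apply,
    kronecker_one_mul_mul_kronecker_one_apply, Finset.sum_comm]
  simp only [ptranspose₁, of_apply, transpose_apply]
  exact Finset.sum_congr rfl fun k _ => Finset.sum_congr rfl fun l _ => by ring

end PartialTraceAndTranspose

section Separable

variable {V B : Type*} [Fintype V] [Fintype B]

theorem separable_sum_kronecker {κ : Type*} [Fintype κ] {τ : κ → Matrix V V ℂ}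
    {χ : κ → Matrix B B ℂ} (hτ : ∀ i, (τ i).PosSemidef) (hχ : ∀ i, (χ i).PosSemidef) :
    Separable (∑ i, τ i ⊗ₖ χ i) :=
  let e := (Fintype.equivFin κ).symm
  ⟨Fintype.card κ, τ ∘ e, χ ∘ e, fun _ => hτ _, fun _ => hχ _,
    (e.sum_comp fun i => τ i ⊗ₖ χ i).symm⟩

theorem Separable.sum {κ : Type*} [Fintype κ] {M : κ → Matrix (V × B) (V × B) ℂ}
    (hM : ∀ i, Separable (M i)) : Separable (∑ i, M i) := by
  choose n τ χ hτ hχ hM using hM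
  simp only [hM, ← Fintype.sum_sigma']
  exact separable_sum_kronecker (fun j => hτ j.1 j.2) fun j => hχ j.1 j.2

theorem Separable.smul {M : Matrix (V × B) (V × B) ℂ} (hM : Separable M) {c : ℂ} (hc : 0 ≤ c) :
    Separable (c • M) := by
  obtain ⟨n, τ, χ, hτ, hχ, rfl⟩ := hM
  refine ⟨n, fun i => c • τ i, χ, fun i => (hτ i).smul hc, hχ, ?_⟩
  simp only [Finset.smul_sum, smul_kronecker]

theorem Separable.posSemidef {M : Matrix (V × B) (V × B) ℂ} (hM : Separable M) :
    M.PosSemidef := by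
  classical
  obtain ⟨n, τ, χ, hτ, hχ, rfl⟩ := hM
  exact posSemidef_sum _ fun i _ => (hτ i).kronecker (hχ i)

end Separable

section Tomography

variable {V B X : Type*} [Fintype V]

theorem TomoComplete.linearMap_ext {E : Type*} [AddCommGroup E] [Module ℂ E]
    {ω : X → Matrix V V ℂ} (hω : TomoComplete ω) {f g : Matrix V V ℂ →ₗ[ℂ] E}
    (h : ∀ x, f (ω x) = g (ω x)) : f = g := by
  have eq_of_isHermitian (H : Matrix V V ℂ) (hH : H.IsHermitian) : f H = g H :=
    LinearMap.eqOn_span (f := f.restrictScalars ℝ) (g := g.restrictScalars ℝ)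
      (Set.forall_mem_range.mpr h) (hω H hH)
  ext1 W
  rw [← realPart_add_I_smul_imaginaryPart W, map_add, map_add, map_smul, map_smul,
    eq_of_isHermitian _ (realPart W).2, eq_of_isHermitian _ (imaginaryPart W).2]

variable [Fintype B] [DecidableEq B]

/-- The action `W ↦ tr_V[M (W ⊗ 1)]` of a channel operator `M` on an input `W`, as a bilinear
map. -/
noncomputable def teleMap :
    Matrix (V × B) (V × B) ℂ →ₗ[ℂ] Matrix V V ℂ →ₗ[ℂ] Matrix B B ℂ :=
  LinearMap.mk₂ ℂ (fun M W => ptrace₁ (M * (W ⊗ₖ (1 : Matrix B B ℂ))))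
    (fun M N W => by rw [add_mul, ptrace₁_add])
    (fun c M W => by rw [smul_mul, ptrace₁_smul])
    (fun M W W' => by rw [add_kronecker, mul_add, ptrace₁_add])
    (fun c M W => by rw [smul_kronecker, Matrix.mul_smul, ptrace₁_smul])

theorem teleMap_apply (M : Matrix (V × B) (V × B) ℂ) (W : Matrix V V ℂ) :
    teleMap M W = ptrace₁ (M * (W ⊗ₖ (1 : Matrix B B ℂ))) :=
  rfl

theorem teleMap_single_apply [DecidableEq V] (M : Matrix (V × B) (V × B) ℂ) (v v' : V) (b b' : B) :
    teleMap M (single v' v 1) b b' = M (v, b) (v', b') := by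
  simp [teleMap_apply, ptrace₁, mul_apply, Fintype.sum_prod_type, single_apply, one_apply, ite_and]

theorem teleMap_injective :
    Function.Injective (teleMap : Matrix (V × B) (V × B) ℂ → Matrix V V ℂ →ₗ[ℂ] _) := by
  classical
  intro M N h
  ext ⟨v, b⟩ ⟨v', b'⟩
  rw [← teleMap_single_apply M, ← teleMap_single_apply N, h]

theorem TomoComplete.teleMap_ext {ω : X → Matrix V V ℂ} (hω : TomoComplete ω)
    {M N : Matrix (V × B) (V × B) ℂ} (h : ∀ x, teleMap M (ω x) = teleMap N (ω x)) : M = N :=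
  teleMap_injective (hω.linearMap_ext h)

theorem teleMap_one_kronecker [DecidableEq V] (R : Matrix B B ℂ) (W : Matrix V V ℂ) :
    teleMap ((1 : Matrix V V ℂ) ⊗ₖ R) W = W.trace • R := by
  rw [teleMap_apply, ← mul_kronecker_mul, one_mul, mul_one, ptrace₁_kronecker]

end Tomography

section ChannelOperator

variable {V A B : Type*} [Fintype V] [Fintype A] [Fintype B] [DecidableEq V] [DecidableEq B]

theorem chanOp_apply (M : Matrix (V × A) (V × A) ℂ) (ρ : Matrix (A × B) (A × B) ℂ) (p q : V × B) :
    chanOp M ρ p q = ∑ a, ∑ a', M (p.1, a) (q.1, a') * ρ (a', p.2) (a, q.2) := by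
  simp [chanOp, ptraceMid, mul_apply, Fintype.sum_prod_type, one_apply]

theorem chanOp_add_right (M : Matrix (V × A) (V × A) ℂ) (ρ ρ' : Matrix (A × B) (A × B) ℂ) :
    chanOp M (ρ + ρ') = chanOp M ρ + chanOp M ρ' := by
  ext p q
  simp [chanOp_apply, mul_add, Finset.sum_add_distrib]

theorem chanOp_smul_right (c : ℂ) (M : Matrix (V × A) (V × A) ℂ) (ρ : Matrix (A × B) (A × B) ℂ) :
    chanOp M (c • ρ) = c • chanOp M ρ := by
  ext p q
  simp [chanOp_apply, Finset.mul_sum, mul_left_comm]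

theorem chanOp_sum_left {ι : Type*} [Fintype ι] (M : ι → Matrix (V × A) (V × A) ℂ)
    (ρ : Matrix (A × B) (A × B) ℂ) : chanOp (∑ i, M i) ρ = ∑ i, chanOp (M i) ρ := by
  ext p q
  simp only [chanOp_apply, Matrix.sum_apply, Finset.sum_mul]
  symm
  rw [Finset.sum_comm]
  exact Finset.sum_congr rfl fun a _ => Finset.sum_comm

theorem chanOp_one [DecidableEq A] (ρ : Matrix (A × B) (A × B) ℂ) :
    chanOp (1 : Matrix (V × A) (V × A) ℂ) ρ = (1 : Matrix V V ℂ) ⊗ₖ ptrace₁ ρ := by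
  ext p q
  simp [chanOp_apply, one_apply, ptrace₁, ite_and]

theorem teleA_eq_teleMap (M : Matrix (V × A) (V × A) ℂ) (ρ : Matrix (A × B) (A × B) ℂ)
    (ω : Matrix V V ℂ) : teleA M ρ ω = teleMap (chanOp M ρ) ω := by
  ext b b'
  simp only [teleMap_apply, teleA, ptraceVA, ptrace₁, of_apply, mul_apply, chanOp_apply,
    Fintype.sum_prod_type, reindex_apply, submatrix_apply, kroneckerMap_apply, one_apply,
    Equiv.prodAssoc_symm_apply, mul_ite, ite_mul, mul_one, mul_zero, zero_mul, Finset.sum_ite_eq,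
    Finset.sum_ite_eq', Finset.mem_univ, if_true, Finset.sum_mul]
  refine Finset.sum_congr rfl fun v _ => Finset.sum_comm.trans ?_
  refine Finset.sum_congr rfl fun v' _ => Finset.sum_congr rfl fun a _ => ?_
  exact Finset.sum_congr rfl fun a' _ => by ring

theorem posSemidef_sum_sum_of_posSemidef {κ : Type*} [Finite κ] {K : Matrix (A × κ) (A × κ) ℂ}
    (hK : K.PosSemidef) : (of fun p q => ∑ a, ∑ a', K (a, p) (a', q)).PosSemidef := by
  classical
  have := Fintype.ofFinite κ
  let G : Matrix (A × κ) κ ℂ := of fun x q => (1 : Matrix κ κ ℂ) x.2 q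
  convert hK.conjTranspose_mul_mul_same G using 1
  ext p q
  simp only [G, of_apply, one_apply, mul_apply, conjTranspose_apply, RCLike.star_def,
    MonoidWithZeroHom.map_ite_one_zero, ite_mul, one_mul, zero_mul, Fintype.sum_prod_type,
    Finset.sum_ite_eq', Finset.mem_univ, if_true, mul_ite, mul_one, mul_zero]
  exact Finset.sum_comm

theorem posSemidef_ptranspose₁_chanOp {N : Matrix (V × A) (V × A) ℂ}
    {ρ : Matrix (A × B) (A × B) ℂ} (hN : N.PosSemidef) (hρ : ρ.PosSemidef) :
    (ptranspose₁ (chanOp N ρ)).PosSemidef := by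
  classical
  let f : A × (V × B) → (V × A) × (A × B) := fun x => ((x.2.1, x.1), (x.1, x.2.2))
  convert posSemidef_sum_sum_of_posSemidef ((hN.transpose.kronecker hρ).submatrix f) using 1
  ext p q
  simp only [ptranspose₁, of_apply, chanOp_apply]
  exact Finset.sum_comm

end ChannelOperator

section Assemblage

variable {V A B : Type*} [Fintype V] [Fintype A] [Fintype B] [DecidableEq B]

theorem teleA_submatrix {A' : Type*} [Fintype A'] (e : A' ≃ A) (M : Matrix (V × A) (V × A) ℂ)
    (ρ : Matrix (A × B) (A × B) ℂ) (ω : Matrix V V ℂ) :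
    teleA (M.submatrix (Prod.map id e) (Prod.map id e))
      (ρ.submatrix (Prod.map e id) (Prod.map e id)) ω = teleA M ρ ω := by
  classical
  have chanOp_eq : chanOp (M.submatrix (Prod.map id e) (Prod.map id e))
      (ρ.submatrix (Prod.map e id) (Prod.map e id)) = chanOp M ρ := by
    ext p q
    simp only [chanOp_apply, submatrix_apply, Prod.map_apply, id_eq]
    rw [e.sum_comp fun a => ∑ a', M (p.1, a) (q.1, e a') * ρ (e a', p.2) (a, q.2)]
    exact Finset.sum_congr rfl fun a _ =>
      e.sum_comp fun a' => M (p.1, a) (q.1, a') * ρ (a', p.2) (a, q.2)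
  rw [teleA_eq_teleMap, teleA_eq_teleMap, chanOp_eq]

theorem teleA_smul_add_smul (M : Matrix (V × A) (V × A) ℂ) (c r : ℂ)
    (ρ ρ' : Matrix (A × B) (A × B) ℂ) (ω : Matrix V V ℂ) :
    teleA M (c • (ρ + r • ρ')) ω = c • (teleA M ρ ω + r • teleA M ρ' ω) := by
  classical
  simp only [teleA_eq_teleMap, chanOp_smul_right, chanOp_add_right, map_smul, map_add,
    LinearMap.smul_apply, LinearMap.add_apply]

theorem IsState.submatrix_equiv {n m : Type*} [Fintype n] [Fintype m] {ρ : Matrix n n ℂ}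
    (hρ : IsState ρ) (e : m ≃ n) : IsState (ρ.submatrix e e) :=
  ⟨hρ.1.submatrix e, (e.sum_comp fun i => ρ i i).trans hρ.2⟩

variable [DecidableEq V] [DecidableEq A] {ι : Type*} [Fintype ι]

theorem exists_fin_ancilla {N : ι → Matrix (V × A) (V × A) ℂ} (hN : ∀ i, (N i).PosSemidef)
    (hsum : ∑ i, N i = 1) {ρ : Matrix (A × B) (A × B) ℂ} (hρ : IsState ρ) :
    ∃ (m : ℕ) (ρ' : Matrix (Fin m × B) (Fin m × B) ℂ)
      (N' : ι → Matrix (V × Fin m) (V × Fin m) ℂ),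
      IsState ρ' ∧ (∀ i, (N' i).PosSemidef) ∧ ∑ i, N' i = 1 ∧
        ∀ i ω, teleA (N' i) ρ' ω = teleA (N i) ρ ω := by
  let e := (Fintype.equivFin A).symm
  refine ⟨Fintype.card A, _, fun i => (N i).submatrix (Prod.map id e) (Prod.map id e),
    hρ.submatrix_equiv (e.prodCongr (Equiv.refl B)), fun i => (hN i).submatrix _, ?_,
    fun i => teleA_submatrix e (N i) ρ⟩
  calc ∑ i, (N i).submatrix (Prod.map id e) (Prod.map id e)
      = (∑ i, N i).submatrix (Prod.map id e) (Prod.map id e) := by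
        ext p q
        simp only [Matrix.sum_apply, submatrix_apply]
    _ = 1 := by rw [hsum, submatrix_one _ (Function.injective_id.prodMap e.injective)]

theorem sum_chanOp_eq_one_kronecker_sum_teleA
    {M : ι → Matrix (V × A) (V × A) ℂ} (hM : ∑ i, M i = 1) (ρ : Matrix (A × B) (A × B) ℂ)
    {ω : Matrix V V ℂ} (hω : ω.trace = 1) :
    ∑ i, chanOp (M i) ρ = (1 : Matrix V V ℂ) ⊗ₖ ∑ i, teleA (M i) ρ ω := by
  have sum_chanOp : ∑ i, chanOp (M i) ρ = (1 : Matrix V V ℂ) ⊗ₖ ptrace₁ ρ := by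
    rw [← chanOp_sum_left, hM, chanOp_one]
  simp only [teleA_eq_teleMap]
  rw [← LinearMap.sum_apply, ← map_sum, sum_chanOp, teleMap_one_kronecker, hω, one_smul]

end Assemblage

section LocalConjugation

variable {V B : Type*} [Fintype V] [Fintype B] [DecidableEq B]

/-- The map `M ↦ (U ⊗ 1) M^{T_V} (U† ⊗ 1)`, which a Bell effect `U` induces on the shared state;
it is undone by the same map for the transpose of `U`. -/
noncomputable def conjPTranspose (U : Matrix V V ℂ) :
    Matrix (V × B) (V × B) ℂ →ₗ[ℂ] Matrix (V × B) (V × B) ℂ where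
  toFun M := (U ⊗ₖ (1 : Matrix B B ℂ)) * ptranspose₁ M * (Uᴴ ⊗ₖ (1 : Matrix B B ℂ))
  map_add' M N := by rw [ptranspose₁_add, mul_add, add_mul]
  map_smul' c M := by rw [ptranspose₁_smul, Matrix.mul_smul, smul_mul, RingHom.id_apply]

theorem conjPTranspose_apply (U : Matrix V V ℂ) (M : Matrix (V × B) (V × B) ℂ) :
    conjPTranspose U M = (U ⊗ₖ (1 : Matrix B B ℂ)) * ptranspose₁ M * (Uᴴ ⊗ₖ (1 : Matrix B B ℂ)) :=
  rfl

theorem conjPTranspose_kronecker (U P : Matrix V V ℂ) (Q : Matrix B B ℂ) :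
    conjPTranspose U (P ⊗ₖ Q) = (U * Pᵀ * Uᴴ) ⊗ₖ Q := by
  rw [conjPTranspose_apply, ptranspose₁_kronecker, ← mul_kronecker_mul, ← mul_kronecker_mul,
    one_mul, mul_one]

theorem Separable.conjPTranspose {M : Matrix (V × B) (V × B) ℂ} (hM : Separable M)
    (U : Matrix V V ℂ) : Separable (conjPTranspose U M) := by
  obtain ⟨n, τ, χ, hτ, hχ, rfl⟩ := hM
  refine ⟨n, fun i => U * (τ i)ᵀ * Uᴴ, χ, fun i => (hτ i).transpose.mul_mul_conjTranspose_same U,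
    hχ, ?_⟩
  simp only [map_sum, conjPTranspose_kronecker]

theorem posSemidef_conjPTranspose {M : Matrix (V × B) (V × B) ℂ}
    (hM : (ptranspose₁ M).PosSemidef) (U : Matrix V V ℂ) : (conjPTranspose U M).PosSemidef := by
  simpa only [conjPTranspose_apply, conjTranspose_kronecker, conjTranspose_one] using
    hM.mul_mul_conjTranspose_same (U ⊗ₖ (1 : Matrix B B ℂ))

variable [DecidableEq V]

theorem conjTranspose_kronecker_one_mul_self {U : Matrix V V ℂ} (hU : U ∈ unitaryGroup V ℂ) :
    (Uᴴ ⊗ₖ (1 : Matrix B B ℂ)) * (U ⊗ₖ (1 : Matrix B B ℂ)) = 1 := by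
  rw [← mul_kronecker_mul, ← star_eq_conjTranspose, mem_unitaryGroup_iff'.mp hU, one_mul,
    one_kronecker_one]

theorem conjPTranspose_transpose_conjPTranspose {U : Matrix V V ℂ} (hU : U ∈ unitaryGroup V ℂ)
    (M : Matrix (V × B) (V × B) ℂ) : conjPTranspose Uᵀ (conjPTranspose U M) = M := by
  have ptranspose₁_eq : conjPTranspose Uᵀ (conjPTranspose U M) =
      ptranspose₁ ((Uᴴ ⊗ₖ (1 : Matrix B B ℂ)) * conjPTranspose U M *
        (U ⊗ₖ (1 : Matrix B B ℂ))) := by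
    rw [ptranspose₁_mul_mul]
    rfl
  have cancel := conjTranspose_kronecker_one_mul_self (B := B) hU
  rw [ptranspose₁_eq, conjPTranspose_apply]
  simp only [Matrix.mul_assoc, cancel, mul_one]
  rw [← Matrix.mul_assoc, cancel, one_mul, ptranspose₁_ptranspose₁]

theorem trace_conjPTranspose {U : Matrix V V ℂ} (hU : U ∈ unitaryGroup V ℂ)
    (M : Matrix (V × B) (V × B) ℂ) : (conjPTranspose U M).trace = M.trace := by
  rw [conjPTranspose_apply, trace_mul_comm, ← Matrix.mul_assoc,
    conjTranspose_kronecker_one_mul_self hU, one_mul, trace_ptranspose₁]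

end LocalConjugation

section BellEffect

variable {V : Type*} [Fintype V]

/-- The Bell effect `(U ⊗ 1) Φ⁺ (U† ⊗ 1)`: the vector `(U ⊗ 1)|Φ⁺⟩` has entries `U i j / √d`, where
`d = card V`. -/
noncomputable def bellEffect (U : Matrix V V ℂ) : Matrix (V × V) (V × V) ℂ :=
  (Fintype.card V : ℂ)⁻¹ • vecMulVec (fun p => U p.1 p.2) (star fun p => U p.1 p.2)

theorem bellEffect_apply (U : Matrix V V ℂ) (p q : V × V) :
    bellEffect U p q = (Fintype.card V : ℂ)⁻¹ * (U p.1 p.2 * star (U q.1 q.2)) :=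
  rfl

theorem posSemidef_bellEffect (U : Matrix V V ℂ) : (bellEffect U).PosSemidef :=
  (posSemidef_vecMulVec_self_star _).smul (by positivity)

variable [DecidableEq V]

theorem chanOp_bellEffect {B : Type*} [Fintype B] [DecidableEq B] (U : Matrix V V ℂ)
    (ρ : Matrix (V × B) (V × B) ℂ) :
    chanOp (bellEffect U) ρ = (Fintype.card V : ℂ)⁻¹ • conjPTranspose U ρ := by
  ext p q
  rw [Matrix.smul_apply, conjPTranspose_apply, kronecker_one_mul_mul_kronecker_one_apply,
    chanOp_apply, smul_eq_mul, Finset.mul_sum]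
  refine Finset.sum_congr rfl fun a _ => ?_
  rw [Finset.mul_sum]
  refine Finset.sum_congr rfl fun a' _ => ?_
  rw [bellEffect_apply, ptranspose₁, of_apply, conjTranspose_apply]
  ring

theorem Separable.chanOp_bellEffect {B : Type*} [Fintype B] [DecidableEq B]
    {σ : Matrix (V × B) (V × B) ℂ} (hσ : Separable σ) (U : Matrix V V ℂ) :
    Separable (chanOp (bellEffect U) σ) := by
  rw [Tele.chanOp_bellEffect]
  exact (hσ.conjPTranspose U).smul (by positivity)

variable [Nonempty V]

theorem trace_bellEffect {U : Matrix V V ℂ} (hU : U ∈ unitaryGroup V ℂ) :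
    (bellEffect U).trace = 1 := by
  have sum_eq_card : ∑ i, ∑ j, U i j * star (U i j) = Fintype.card V := by
    rw [← trace_one, ← mem_unitaryGroup_iff.mp hU]
    simp only [Matrix.trace, diag_apply, mul_apply, star_apply]
  simp only [Matrix.trace, diag_apply, bellEffect_apply, ← Finset.mul_sum, Fintype.sum_prod_type,
    sum_eq_card]
  exact inv_mul_cancel₀ (Nat.cast_ne_zero.mpr Fintype.card_ne_zero)

theorem card_eq_of_sum_bellEffect_eq_one {ι : Type*} [Fintype ι] {U : ι → Matrix V V ℂ}
    (hU : ∀ a, U a ∈ unitaryGroup V ℂ) (hsum : ∑ a, bellEffect (U a) = 1) :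
    (Fintype.card ι : ℂ) = Fintype.card V * Fintype.card V := by
  have h := congrArg Matrix.trace hsum
  simpa only [trace_sum, trace_bellEffect (hU _), trace_one, Finset.sum_const, Finset.card_univ,
    Fintype.card_prod, nsmul_one, Nat.cast_mul] using h

end BellEffect

section Decoding

variable {V B ι : Type*} [Fintype V] [Fintype B] [DecidableEq B] [Fintype ι]

/-- The state recovered from the channel operators `M a` of a teleportation experiment by inverting,
for each outcome `a`, the Bell effect of `U a`. In an ideal experiment with `d = card V` each of the
`d²` outcomes contributes `ρ / d`, whence the factor `1 / d`. -/
noncomputable def decode (U : ι → Matrix V V ℂ) :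
    (ι → Matrix (V × B) (V × B) ℂ) →ₗ[ℂ] Matrix (V × B) (V × B) ℂ :=
  (Fintype.card V : ℂ)⁻¹ • ∑ a, conjPTranspose (U a)ᵀ ∘ₗ LinearMap.proj a

theorem decode_apply (U : ι → Matrix V V ℂ) (M : ι → Matrix (V × B) (V × B) ℂ) :
    decode U M = (Fintype.card V : ℂ)⁻¹ • ∑ a, conjPTranspose (U a)ᵀ (M a) := by
  simp only [decode, LinearMap.smul_apply, LinearMap.sum_apply, LinearMap.comp_apply,
    LinearMap.proj_apply]

theorem Separable.decode (U : ι → Matrix V V ℂ) {M : ι → Matrix (V × B) (V × B) ℂ}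
    (hM : ∀ a, Separable (M a)) : Separable (decode U M) := by
  rw [decode_apply]
  exact (Separable.sum fun a => (hM a).conjPTranspose _).smul (by positivity)

theorem posSemidef_decode (U : ι → Matrix V V ℂ) {M : ι → Matrix (V × B) (V × B) ℂ}
    (hM : ∀ a, (ptranspose₁ (M a)).PosSemidef) : (decode U M).PosSemidef := by
  rw [decode_apply]
  exact (posSemidef_sum _ fun a _ => posSemidef_conjPTranspose (hM a) _).smul (by positivity)

variable [DecidableEq V]

theorem trace_decode {U : ι → Matrix V V ℂ} (hU : ∀ a, U a ∈ unitaryGroup V ℂ)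
    (M : ι → Matrix (V × B) (V × B) ℂ) :
    (decode U M).trace = (Fintype.card V : ℂ)⁻¹ * (∑ a, M a).trace := by
  simp only [decode_apply, trace_smul, trace_sum, smul_eq_mul,
    trace_conjPTranspose (transpose_mem_unitaryGroup_iff.mpr (hU _))]

variable [Nonempty V]

theorem isState_decode_chanOp {A : Type*} [Fintype A] [DecidableEq A] {U : ι → Matrix V V ℂ}
    (hU : ∀ a, U a ∈ unitaryGroup V ℂ) {N : ι → Matrix (V × A) (V × A) ℂ}
    (hN : ∀ a, (N a).PosSemidef) (hsum : ∑ a, N a = 1) {ρ : Matrix (A × B) (A × B) ℂ}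
    (hρ : IsState ρ) : IsState (decode U fun a => chanOp (N a) ρ) := by
  refine ⟨posSemidef_decode U fun a => posSemidef_ptranspose₁_chanOp (hN a) hρ.1, ?_⟩
  rw [trace_decode hU, ← chanOp_sum_left, hsum, chanOp_one, trace_kronecker, trace_one,
    trace_ptrace₁, hρ.2, mul_one]
  exact inv_mul_cancel₀ (Nat.cast_ne_zero.mpr Fintype.card_ne_zero)

theorem decode_chanOp_bellEffect {U : ι → Matrix V V ℂ} (hU : ∀ a, U a ∈ unitaryGroup V ℂ)
    (hsum : ∑ a, bellEffect (U a) = 1) (ρ : Matrix (V × B) (V × B) ℂ) :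
    (decode U fun a => chanOp (bellEffect (U a)) ρ) = ρ := by
  have hV : (Fintype.card V : ℂ) ≠ 0 := Nat.cast_ne_zero.mpr Fintype.card_ne_zero
  simp only [decode_apply, chanOp_bellEffect, map_smul,
    conjPTranspose_transpose_conjPTranspose (hU _), Finset.sum_const, Finset.card_univ]
  rw [← Nat.cast_smul_eq_nsmul ℂ, smul_smul, smul_smul, card_eq_of_sum_bellEffect_eq_one hU hsum]
  field_simp
  rw [one_smul]

end Decoding

section Robustness

variable {V B ι X : Type*} [Fintype V] [Fintype B] [Fintype ι] [DecidableEq V] [DecidableEq B]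

theorem separable_of_simulation [Nonempty V] {U : ι → Matrix V V ℂ}
    (hU : ∀ a, U a ∈ unitaryGroup V ℂ) (hsum : ∑ a, bellEffect (U a) = 1)
    {ω : X → Matrix V V ℂ} (hω : TomoComplete ω) {A : Type*} [Fintype A]
    {N : ι → Matrix (V × A) (V × A) ℂ} {ρ : Matrix (V × B) (V × B) ℂ}
    {ρs : Matrix (A × B) (A × B) ℂ} {M : ι → Matrix (V × B) (V × B) ℂ}
    (hM : ∀ a, Separable (M a)) {c r : ℂ}
    (h : ∀ a x, c • (teleA (bellEffect (U a)) ρ (ω x) + r • teleA (N a) ρs (ω x)) =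
      teleMap (M a) (ω x)) :
    Separable (c • (ρ + r • decode U fun a => chanOp (N a) ρs)) := by
  have hM_eq : M = c • ((fun a => chanOp (bellEffect (U a)) ρ) + r • fun a => chanOp (N a) ρs) := by
    refine funext fun a => hω.teleMap_ext fun x => ?_
    simp only [← h a x, teleA_eq_teleMap, Pi.smul_apply, Pi.add_apply, map_smul, map_add,
      LinearMap.smul_apply, LinearMap.add_apply]
  have hdecode := Separable.decode U hM
  rwa [hM_eq, map_smul, map_add, map_smul, decode_chanOp_bellEffect hU hsum] at hdecode

theorem tauGen_eq_epsGen_general [Nonempty V] {U : ι → Matrix V V ℂ}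
    (hU : ∀ a, U a ∈ unitaryGroup V ℂ) (hsum : ∑ a, bellEffect (U a) = 1)
    (ρ : Matrix (V × B) (V × B) ℂ) {ω : X → Matrix V V ℂ} (hω : ∀ x, (ω x).trace = 1)
    (htomo : TomoComplete ω) :
    tauGen ω (fun a x => teleA (bellEffect (U a)) ρ (ω x)) = epsGen ρ := by
  unfold tauGen epsGen
  congr 1
  ext r
  constructor
  · rintro ⟨hr, m, ρs, N, M, hρs, hN, hN1, hM, hsim, -⟩
    exact ⟨hr, decode U fun a => chanOp (N a) ρs, isState_decode_chanOp hU hN hN1 hρs,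
      separable_of_simulation hU hsum htomo (fun a => (hM a).2) hsim⟩
  · rintro ⟨hr, ρs, hρs, hsep⟩
    obtain ⟨m, ρs', N, hρs', hN, hN1, hnoise⟩ :=
      exists_fin_ancilla (fun a => posSemidef_bellEffect (U a)) hsum hρs
    have hM (a : ι) := hsep.chanOp_bellEffect (U a)
    refine ⟨hr, m, ρs', N, _, hρs', hN, hN1, fun a => ⟨(hM a).posSemidef, hM a⟩,
      fun a x => ?_, fun x => ?_⟩
    · rw [hnoise, ← teleA_smul_add_smul, teleA_eq_teleMap, teleMap_apply]
    · rw [sum_chanOp_eq_one_kronecker_sum_teleA hsum _ (hω x)]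
      simp only [teleA_smul_add_smul, hnoise, ← Finset.smul_sum, Finset.sum_add_distrib]

end Robustness

section HeisenbergWeyl

/-- The primitive `d`-th root of unity `exp(2πi/d)`, in which the entries of the clock matrix are
powers. -/
noncomputable def zeta (d : ℕ) : ℂ :=
  Complex.exp (2 * Real.pi * Complex.I / d)

theorem clockZ_eq_diagonal (d : ℕ) : clockZ d = diagonal fun i : Fin d => zeta d ^ (i : ℕ) := by
  ext i j
  rw [clockZ, of_apply, diagonal_apply, zeta, ← Complex.exp_nat_mul]
  ring_nf

variable {d : ℕ} [NeZero d]

theorem isPrimitiveRoot_zeta : IsPrimitiveRoot (zeta d) d :=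
  Complex.isPrimitiveRoot_exp d (NeZero.ne d)

theorem star_zeta_pow (k : ℕ) : star (zeta d ^ k) = (zeta d ^ k)⁻¹ := by
  rw [Complex.inv_eq_conj, starRingEnd_apply]
  rw [norm_pow, isPrimitiveRoot_zeta.norm'_eq_one (NeZero.ne d), one_pow]

theorem sum_zeta_pow_mul_star_zeta_pow (j k : Fin d) :
    ∑ q : Fin d, zeta d ^ (j * q : ℕ) * star (zeta d ^ (k * q : ℕ)) =
      if j = k then (d : ℂ) else 0 := by
  have zeta_ne_zero : zeta d ≠ 0 := Complex.exp_ne_zero _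
  let w := zeta d ^ (j : ℕ) / zeta d ^ (k : ℕ)
  have sum_eq_geom_sum : ∑ q : Fin d, zeta d ^ (j * q : ℕ) * star (zeta d ^ (k * q : ℕ)) =
      ∑ q ∈ Finset.range d, w ^ q := by
    rw [← Fin.sum_univ_eq_sum_range]
    refine Finset.sum_congr rfl fun q _ => ?_
    rw [star_zeta_pow, div_pow, pow_mul, pow_mul, div_eq_mul_inv]
  rw [sum_eq_geom_sum]
  split_ifs with hjk
  · have hw : w = 1 := by
      simp only [w, hjk, div_self (pow_ne_zero _ zeta_ne_zero)]
    simp [hw]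
  · have hw : w ≠ 1 := fun hw => hjk <| Fin.ext <| isPrimitiveRoot_zeta.pow_inj j.2 k.2 <|
      (div_eq_one_iff_eq (pow_ne_zero _ zeta_ne_zero)).mp hw
    have hwd : w ^ d = 1 := by
      rw [div_pow, pow_right_comm, pow_right_comm _ (k : ℕ), isPrimitiveRoot_zeta.pow_eq_one,
        one_pow, one_pow, div_one]
    rw [geom_sum_eq hw, hwd, sub_self, zero_div]

theorem shiftX_apply (i j : Fin d) : shiftX d i j = if i = j + 1 then 1 else 0 := by
  simp [shiftX, Fin.ext_iff, Fin.val_add]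

theorem shiftX_pow_apply (p : ℕ) (i j : Fin d) :
    (shiftX d ^ p) i j = if i = j + Fin.ofNat d p then 1 else 0 := by
  induction p generalizing i with
  | zero => simp [one_apply]
  | succ p ih =>
    have ofNat_succ : Fin.ofNat d p + 1 = Fin.ofNat d (p + 1) := by
      simp [Fin.ext_iff, Fin.val_add]
    simp [pow_succ', mul_apply, ih, shiftX_apply, add_assoc, ofNat_succ, -Fin.ofNat_eq_cast]

theorem HW_apply (a : Fin d × Fin d) (i j : Fin d) :
    HW d a i j = if i = j + a.1 then zeta d ^ (j * a.2 : ℕ) else 0 := by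
  rw [HW, clockZ_eq_diagonal, diagonal_pow, mul_diagonal, shiftX_pow_apply, Fin.ofNat_val_eq_self,
    ite_mul, one_mul, zero_mul, Pi.pow_apply, ← pow_mul]

theorem HW_mem_unitaryGroup (a : Fin d × Fin d) : HW d a ∈ unitaryGroup (Fin d) ℂ := by
  rw [mem_unitaryGroup_iff']
  ext j k
  have zeta_pow_ne_zero : zeta d ^ (k * a.2 : ℕ) ≠ 0 := pow_ne_zero _ (Complex.exp_ne_zero _)
  simp only [mul_apply, star_apply, HW_apply, mul_ite, mul_zero, Finset.sum_ite_eq',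
    Finset.mem_univ, if_true, add_left_inj, one_apply, eq_comm (a := k)]
  split_ifs with hjk
  · rw [hjk, star_zeta_pow, inv_mul_cancel₀ zeta_pow_ne_zero]
  · rw [star_zero, zero_mul]

theorem sum_HW_mul_star_HW (i j k l : Fin d) :
    ∑ a, HW d a i j * star (HW d a k l) = if i = k ∧ j = l then (d : ℂ) else 0 := by
  have sum_snd (p : Fin d) : ∑ q, HW d (p, q) i j * star (HW d (p, q) k l) =
      if p = i - j then if k = l + (i - j) ∧ j = l then (d : ℂ) else 0 else 0 := by
    by_cases hp : p = i - j
    · subst hp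
      by_cases hk : k = l + (i - j)
      · simp only [HW_apply, hk, add_sub_cancel, if_true, true_and, sum_zeta_pow_mul_star_zeta_pow]
      · simp [HW_apply, hk]
    · have hi : i ≠ j + p := fun hi => hp (eq_sub_of_add_eq' hi.symm)
      simp [HW_apply, hp, hi]
  have shift_eq_iff : k = l + (i - j) ∧ j = l ↔ i = k ∧ j = l :=
    and_congr_left fun hjl => by rw [hjl, add_sub_cancel, eq_comm]
  rw [Fintype.sum_prod_type]
  simp only [sum_snd, Finset.sum_ite_eq', Finset.mem_univ, if_true, shift_eq_iff]

theorem bellPOVM_eq_bellEffect (d : ℕ) (a : Fin d × Fin d) :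
    bellPOVM d a = bellEffect (HW d a) := by
  ext p q
  rw [bellPOVM, kronecker_one_mul_mul_kronecker_one_apply, bellEffect_apply]
  simp only [maxEnt, ite_and, of_apply, mul_ite, mul_zero, conjTranspose_apply, ite_mul, zero_mul,
    Finset.sum_ite_irrel, Finset.sum_ite_eq', Finset.mem_univ, if_true, Finset.sum_const_zero,
    Fintype.card_fin]
  ring

theorem sum_bellEffect_HW : ∑ a : Fin d × Fin d, bellEffect (HW d a) = 1 := by
  ext p q
  simp only [Matrix.sum_apply, bellEffect_apply, ← Finset.mul_sum, sum_HW_mul_star_HW, one_apply,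
    Prod.ext_iff, Fintype.card_fin, mul_ite, mul_zero, inv_mul_cancel₀ (NeZero.ne (d : ℂ))]

end HeisenbergWeyl

/-- for a full Bell state measurement and tomographically complete inputs,
τ_gen({σ_{a|ω_x}}) = ε_gen(ρ^{AB}). -/
theorem tauGen_eq_epsGen {B X : Type*} [Fintype B] [DecidableEq B]
    (d : ℕ) (hd : 1 ≤ d)
    (ρ : Matrix (Fin d × B) (Fin d × B) ℂ) (hρ : IsState ρ)
    (ω : X → Matrix (Fin d) (Fin d) ℂ) (hω : ∀ x, IsState (ω x))
    (htomo : TomoComplete ω) :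
    tauGen ω (fun (a : Fin d × Fin d) x => teleA (bellPOVM d a) ρ (ω x)) = epsGen ρ := by
  have : NeZero d := ⟨Nat.one_le_iff_ne_zero.mp hd⟩
  simp only [bellPOVM_eq_bellEffect]
  exact tauGen_eq_epsGen_general HW_mem_unitaryGroup sum_bellEffect_HW ρ (fun x => (hω x).2) htomo

end Tele
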